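/- For any two distinct colours c, q ∈ Fin k, the restriction of the map σ ↦ H(σ,q) to S(c,c) is a bijection from S(c,c) onto S(q,c). -/

import Mathlib

/-- The disagreement graph `Q_{σ(v),q}`: the set of vertices `x` for which there is a
path `v = w₀, …, w_t = x` in `G` all of whose vertices receive colour `σ v` or `q`. -/
def disagreeSet {V : Type*} {k : ℕ} (G : SimpleGraph V) (v : V)
    (σ : V → Fin k) (q : Fin k) : Set V :=
  {x | ∃ p : G.Walk v x, ∀ w ∈ p.support, σ w = σ v ∨ σ w = q}

open Classical in
/-- The `q`-switching `H(σ,q)`: exchange the colours `σ v` and `q` on the disagreement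
graph, leaving all other vertices unchanged. -/
noncomputable def switchColour {V : Type*} {k : ℕ} (G : SimpleGraph V) (v : V)
    (σ : V → Fin k) (q : Fin k) : V → Fin k := fun x =>
  if x ∈ disagreeSet G v σ q then
    if σ x = σ v then q else if σ x = q then σ v else σ x
  else σ x

/-- `S(c,c)`: the proper colourings with `σ v = c`, `σ u = c` whose disagreement graph
`Q_{c,q}` does not contain `u`. -/
def Scc {V : Type*} {k : ℕ} (G : SimpleGraph V) (v u : V) (c q : Fin k) :
    Set (V → Fin k) :=
  {σ | (∀ x y, G.Adj x y → σ x ≠ σ y) ∧ σ v = c ∧ σ u = c ∧ u ∉ disagreeSet G v σ q}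

/-- `S(q,c)`: the proper colourings with `σ v = q`, `σ u = c` whose disagreement graph
`Q_{q,c}` does not contain `u`. -/
def Sqc {V : Type*} {k : ℕ} (G : SimpleGraph V) (v u : V) (c q : Fin k) :
    Set (V → Fin k) :=
  {σ | (∀ x y, G.Adj x y → σ x ≠ σ y) ∧ σ v = q ∧ σ u = c ∧ u ∉ disagreeSet G v σ c}

theorem mem_self_aux {V : Type*} {k : ℕ} (G : SimpleGraph V) (v : V)
    (σ : V → Fin k) (q : Fin k) : v ∈ disagreeSet G v σ q :=
  ⟨SimpleGraph.Walk.nil, by simp⟩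

theorem mem_colour_aux {V : Type*} {k : ℕ} {G : SimpleGraph V} {v : V}
    {σ : V → Fin k} {q : Fin k} {x : V} (hx : x ∈ disagreeSet G v σ q) :
    σ x = σ v ∨ σ x = q := by
  obtain ⟨p, hp⟩ := hx
  exact hp x p.end_mem_support

theorem mem_step_aux {V : Type*} {k : ℕ} {G : SimpleGraph V} {v : V}
    {σ : V → Fin k} {q : Fin k} {x y : V} (hx : x ∈ disagreeSet G v σ q)
    (hxy : G.Adj x y) (hy : σ y = σ v ∨ σ y = q) : y ∈ disagreeSet G v σ q := by
  obtain ⟨p, hp⟩ := hx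
  refine ⟨p.concat hxy, fun w hw => ?_⟩
  rw [SimpleGraph.Walk.support_concat] at hw
  simp only [List.concat_eq_append, List.mem_append, List.mem_singleton] at hw
  rcases hw with hw | rfl
  · exact hp w hw
  · exact hy

theorem switch_v_aux {V : Type*} {k : ℕ} (G : SimpleGraph V) (v : V)
    (σ : V → Fin k) (q : Fin k) : switchColour G v σ q v = q := by
  simp [switchColour, mem_self_aux]

theorem switch_not_mem_aux {V : Type*} {k : ℕ} {G : SimpleGraph V} {v : V}
    {σ : V → Fin k} {q : Fin k} {x : V} (hx : x ∉ disagreeSet G v σ q) :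
    switchColour G v σ q x = σ x := by
  simp [switchColour, hx]

theorem switch_colour_aux {V : Type*} {k : ℕ} (G : SimpleGraph V) (v : V)
    (σ : V → Fin k) (q : Fin k) (x : V) :
    (switchColour G v σ q x = q ∨ switchColour G v σ q x = σ v) ↔ (σ x = σ v ∨ σ x = q) := by
  unfold switchColour
  grind

theorem switch_set_aux {V : Type*} {k : ℕ} (G : SimpleGraph V) (v : V)
    (σ : V → Fin k) (q : Fin k) :
    disagreeSet G v (switchColour G v σ q) (σ v) = disagreeSet G v σ q := by
  ext x
  simp only [disagreeSet, Set.mem_setOf_eq, switch_v_aux, switch_colour_aux]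

theorem switch_switch_aux {V : Type*} {k : ℕ} (G : SimpleGraph V) (v : V)
    (σ : V → Fin k) (q : Fin k) :
    switchColour G v (switchColour G v σ q) (σ v) = σ := by
  ext1 x
  have h1 := switch_set_aux G v σ q
  have h2 := switch_v_aux G v σ q
  by_cases hx : x ∈ disagreeSet G v σ q
  · have h3 : switchColour G v σ q x = if σ x = σ v then q else if σ x = q then σ v else σ x := by
      simp [switchColour, hx]
    have h4 := mem_colour_aux hx
    rw [switchColour, h1, if_pos hx, h2]
    grind
  · rw [switch_not_mem_aux (by rwa [h1]), switch_not_mem_aux hx]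

theorem switch_proper_aux {V : Type*} {k : ℕ} (G : SimpleGraph V) (v : V)
    (σ : V → Fin k) (q : Fin k) (h : ∀ x y, G.Adj x y → σ x ≠ σ y) :
    ∀ x y, G.Adj x y → switchColour G v σ q x ≠ switchColour G v σ q y := by
  intro x y hxy
  have h0 := h x y hxy
  have h1 := fun hx => mem_step_aux (σ := σ) (q := q) (v := v) hx hxy
  have h2 := fun hy => mem_step_aux (σ := σ) (q := q) (v := v) hy hxy.symm
  have h3 := fun hx => mem_colour_aux (G := G) (σ := σ) (q := q) (v := v) (x := x) hx
  have h4 := fun hx => mem_colour_aux (G := G) (σ := σ) (q := q) (v := v) (x := y) hx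
  unfold switchColour
  grind

/-- for distinct colours `c q`, the map `σ ↦ H(σ,q)` restricted to `S(c,c)`
is a bijection from `S(c,c)` onto `S(q,c)`. -/
theorem stmt2 {V : Type*} [Fintype V] {k : ℕ} (hk : 0 < k)
    (G : SimpleGraph V) (v u : V) (huv : u ≠ v) (hadj : ¬ G.Adj v u)
    (c q : Fin k) (hcq : c ≠ q) :
    Set.BijOn (fun σ => switchColour G v σ q) (Scc G v u c q) (Sqc G v u c q) := by
  refine Set.InvOn.bijOn (f' := fun τ => switchColour G v τ c) ⟨?_, ?_⟩ ?_ ?_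
  · rintro σ ⟨-, rfl, -, -⟩
    exact switch_switch_aux G v σ q
  · rintro τ ⟨-, rfl, -, -⟩
    exact switch_switch_aux G v τ c
  · rintro σ ⟨h1, rfl, h3, h4⟩
    exact ⟨switch_proper_aux G v σ q h1, switch_v_aux G v σ q,
      (switch_not_mem_aux h4).trans h3, by rwa [switch_set_aux]⟩
  · rintro τ ⟨h1, rfl, h3, h4⟩
    exact ⟨switch_proper_aux G v τ c h1, switch_v_aux G v τ c,
      (switch_not_mem_aux h4).trans h3, by rwa [switch_set_aux]⟩
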